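/- arXiv:2205.04303 — 2 statements merged into one kernel-verified Lean document; each statement's English description precedes it below -/
import Mathlib

section
/- Let α > 1 and f(z) = Σ_{k≥0} a_k z^k ∈ D_α. Then Σ_k |a_k| < ∞, so the series Σ_k a_k z^k converges absolutely for every z with |z| ≤ 1 and defines a continuous extension of f to the closed unit disc. Moreover, f is cyclic for D_α if and only if Σ_k a_k z^k ≠ 0 for every z with |z| ≤ 1, equivalently, if and only if there exists c > 0 with |f(z)| > c for all z ∈ 𝔻. -/
open Filter Topology

noncomputable section

/-- Membership in the Dirichlet-type space `D_α`, described via Taylor coefficients. -/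
def MemD (α : ℝ) (a : ℕ → ℂ) : Prop :=
  Summable (fun k : ℕ => ‖a k‖ ^ 2 * ((k : ℝ) + 1) ^ α)

/-- The norm of `D_α`, on coefficient sequences. -/
def DNorm (α : ℝ) (a : ℕ → ℂ) : ℝ :=
  Real.sqrt (∑' k : ℕ, ‖a k‖ ^ 2 * ((k : ℝ) + 1) ^ α)

/-- The inner product of `D_α`, on coefficient sequences. -/
def Dinner (α : ℝ) (a b : ℕ → ℂ) : ℂ :=
  ∑' k : ℕ, a k * (starRingEnd ℂ) (b k) * ((((k : ℝ) + 1) ^ α : ℝ) : ℂ)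

/-- Cauchy product of coefficient sequences (coefficients of the product function). -/
def mulCoeff (a b : ℕ → ℂ) : ℕ → ℂ :=
  fun k => ∑ i ∈ Finset.range (k + 1), a i * b (k - i)

/-- Coefficient sequence of the constant function `1`. -/
def oneCoeff : ℕ → ℂ := fun k => if k = 0 then 1 else 0

/-- `f` is cyclic for (the shift operator on) `D_α`: there are polynomials `p n` with
`‖p n · f - 1‖_α → 0`. -/
def Cyclic (α : ℝ) (f : ℕ → ℂ) : Prop :=
  ∃ p : ℕ → Polynomial ℂ,
    Tendsto (fun n => DNorm α (fun k => mulCoeff (p n).coeff f k - oneCoeff k)) atTop (𝓝 0)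

/-- Coefficients of `S^t f`, where `S` is the shift operator `(Sf)(z) = z f(z)`. -/
def shiftPow (t : ℕ) (a : ℕ → ℂ) : ℕ → ℂ :=
  fun k => if k < t then 0 else a (k - t)

/-- Operator norm of `S^t` on `D_α`. -/
def shiftOpNorm (α : ℝ) (t : ℕ) : ℝ :=
  sSup {r : ℝ | ∃ a : ℕ → ℂ, MemD α a ∧ DNorm α a ≤ 1 ∧ r = DNorm α (shiftPow t a)}

/-- `p` is a `d`-th optimal polynomial approximant to `1/f` in `D_α`. -/
def IsOPA (α : ℝ) (f : ℕ → ℂ) (d : ℕ) (p : Polynomial ℂ) : Prop :=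
  p.natDegree ≤ d ∧
    ∀ q : Polynomial ℂ, q.natDegree ≤ d →
      DNorm α (fun k => mulCoeff p.coeff f k - oneCoeff k) ≤
        DNorm α (fun k => mulCoeff q.coeff f k - oneCoeff k)

/-- The matrix `M` of the linear system determining the `d`-th o.p.a. to `1/f`:
`m_{j,k} = ⟨S^k f, S^j f⟩_α`. -/
def opaMatrix (α : ℝ) (d : ℕ) (f : ℕ → ℂ) : Matrix (Fin (d + 1)) (Fin (d + 1)) ℂ :=
  Matrix.of fun j k => Dinner α (shiftPow (k : ℕ) f) (shiftPow (j : ℕ) f)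

/-- The vector `b` of the linear system determining the `d`-th o.p.a. to `1/f`:
`b_j = ⟨1, S^j f⟩_α`. -/
def opaVec (α : ℝ) (d : ℕ) (f : ℕ → ℂ) : Fin (d + 1) → ℂ :=
  fun j => Dinner α oneCoeff (shiftPow (j : ℕ) f)

/-- Frobenius norm of a complex matrix. -/
def frobNorm {m n : ℕ} (M : Matrix (Fin m) (Fin n) ℂ) : ℝ :=
  Real.sqrt (∑ j, ∑ k, ‖M j k‖ ^ 2)

/-- Euclidean norm on `ℂ^m`. -/
def euclNorm {m : ℕ} (v : Fin m → ℂ) : ℝ :=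
  Real.sqrt (∑ j, ‖v j‖ ^ 2)

/-- `α`-weighted Frobenius norm: the Frobenius norm of the matrix in the orthonormal
basis `{z^k/(k+1)^{α/2}}` of the map whose matrix in `{z^k}` is `M`. -/
def wFrobNorm (α : ℝ) {m : ℕ} (M : Matrix (Fin m) (Fin m) ℂ) : ℝ :=
  Real.sqrt (∑ j, ∑ k, ‖M j k‖ ^ 2 * (((j : ℕ) : ℝ) + 1) ^ α * (((k : ℕ) : ℝ) + 1) ^ (-α))

/-- Coefficients of the reproducing kernel of `D_α` at `w ∈ 𝔻`. -/
def kern (α : ℝ) (w : ℂ) : ℕ → ℂ :=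
  fun k => (starRingEnd ℂ) w ^ k / ((((k : ℝ) + 1) ^ α : ℝ) : ℂ)


/-- The sum of `(i+1)^(-α)`. -/
def zSum (α : ℝ) : ℝ := ∑' i : ℕ, ((i : ℝ) + 1) ^ (-α)

lemma summable_zSum {α : ℝ} (hα : 1 < α) : Summable (fun i : ℕ => ((i : ℝ) + 1) ^ (-α)) := by
  have h := (summable_nat_add_iff (f := fun n : ℕ => (n : ℝ) ^ (-α)) 1).2
    (Real.summable_nat_rpow.2 (by linarith))
  simpa using h

lemma zSum_pos {α : ℝ} (hα : 1 < α) : 0 < zSum α := by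
  refine (summable_zSum hα).tsum_pos (fun i => by positivity) 0 (by simp)

/-- The algebra constant. -/
def kConst (α : ℝ) : ℝ := 2 ^ α * (2 * zSum α)

lemma kConst_pos {α : ℝ} (hα : 1 < α) : 0 < kConst α := by
  have := zSum_pos hα
  unfold kConst; positivity

lemma weight_ineq {α : ℝ} (hα : 1 < α) (i j : ℕ) :
    (((i + j : ℕ) : ℝ) + 1) ^ α ≤ 2 ^ α * (((i : ℝ) + 1) ^ α + ((j : ℝ) + 1) ^ α) := by
  have h0 : (0 : ℝ) ≤ α := by linarith
  rcases le_total i j with h | h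
  · have h' : (i : ℝ) ≤ j := by exact_mod_cast h
    calc (((i + j : ℕ) : ℝ) + 1) ^ α ≤ (2 * ((j : ℝ) + 1)) ^ α := by
          apply Real.rpow_le_rpow (by positivity) _ h0
          push_cast; linarith
      _ = 2 ^ α * ((j : ℝ) + 1) ^ α := Real.mul_rpow (by norm_num) (by positivity)
      _ ≤ _ := by
          apply mul_le_mul_of_nonneg_left _ (by positivity)
          have : 0 ≤ ((i : ℝ) + 1) ^ α := by positivity
          linarith
  · have h' : (j : ℝ) ≤ i := by exact_mod_cast h
    calc (((i + j : ℕ) : ℝ) + 1) ^ α ≤ (2 * ((i : ℝ) + 1)) ^ α := by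
          apply Real.rpow_le_rpow (by positivity) _ h0
          push_cast; linarith
      _ = 2 ^ α * ((i : ℝ) + 1) ^ α := Real.mul_rpow (by norm_num) (by positivity)
      _ ≤ _ := by
          apply mul_le_mul_of_nonneg_left _ (by positivity)
          have : 0 ≤ ((j : ℝ) + 1) ^ α := by positivity
          linarith

lemma weight_ineq' {α : ℝ} (hα : 1 < α) (i j : ℕ) :
    (((i + j : ℕ) : ℝ) + 1) ^ α * (((i : ℝ) + 1) ^ (-α) * ((j : ℝ) + 1) ^ (-α))
      ≤ 2 ^ α * (((i : ℝ) + 1) ^ (-α) + ((j : ℝ) + 1) ^ (-α)) := by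
  have h := weight_ineq hα i j
  have hi : 0 < ((i : ℝ) + 1) ^ α := by positivity
  have hj : 0 < ((j : ℝ) + 1) ^ α := by positivity
  rw [Real.rpow_neg (by positivity), Real.rpow_neg (by positivity)]
  calc _ ≤ (2 ^ α * (((i : ℝ) + 1) ^ α + ((j : ℝ) + 1) ^ α)) *
          ((((i : ℝ) + 1) ^ α)⁻¹ * (((j : ℝ) + 1) ^ α)⁻¹) :=
        mul_le_mul_of_nonneg_right h (by positivity)
    _ = _ := by field_simp; ring

lemma weight_sum {α : ℝ} (hα : 1 < α) (k : ℕ) :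
    ((k : ℝ) + 1) ^ α * ∑ i ∈ Finset.range (k + 1),
      (((i : ℝ) + 1) ^ (-α) * (((k - i : ℕ) : ℝ) + 1) ^ (-α)) ≤ kConst α := by
  have hs := summable_zSum hα
  have hle : ∑ i ∈ Finset.range (k + 1), ((i : ℝ) + 1) ^ (-α) ≤ zSum α :=
    hs.sum_le_tsum _ (fun i _ => by positivity)
  have hrefl : ∑ i ∈ Finset.range (k + 1), (((k - i : ℕ) : ℝ) + 1) ^ (-α)
      = ∑ i ∈ Finset.range (k + 1), ((i : ℝ) + 1) ^ (-α) :=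
    Finset.sum_range_reflect (fun i : ℕ => ((i : ℝ) + 1) ^ (-α)) (k + 1)
  rw [Finset.mul_sum]
  calc _ ≤ ∑ i ∈ Finset.range (k + 1),
        2 ^ α * (((i : ℝ) + 1) ^ (-α) + (((k - i : ℕ) : ℝ) + 1) ^ (-α)) := by
        apply Finset.sum_le_sum
        intro i hi
        have h := weight_ineq' hα i (k - i)
        rwa [show i + (k - i) = k from by have := Finset.mem_range.1 hi; omega] at h
    _ = 2 ^ α * (2 * ∑ i ∈ Finset.range (k + 1), ((i : ℝ) + 1) ^ (-α)) := by
        rw [← Finset.mul_sum, Finset.sum_add_distrib, hrefl, two_mul]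
    _ ≤ _ := by unfold kConst; gcongr

lemma term_le {α : ℝ} (hα : 1 < α) (a b : ℕ → ℂ) (k : ℕ) :
    ‖mulCoeff a b k‖ ^ 2 * ((k : ℝ) + 1) ^ α ≤ kConst α * ∑ i ∈ Finset.range (k + 1),
      (‖a i‖ ^ 2 * ((i : ℝ) + 1) ^ α) * (‖b (k - i)‖ ^ 2 * (((k - i : ℕ) : ℝ) + 1) ^ α) := by
  have h1 : ‖mulCoeff a b k‖ ≤ ∑ i ∈ Finset.range (k + 1), ‖a i‖ * ‖b (k - i)‖ := by
    unfold mulCoeff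
    refine (norm_sum_le _ _).trans (le_of_eq ?_)
    simp
  have h2 : (∑ i ∈ Finset.range (k + 1), ‖a i‖ * ‖b (k - i)‖) ^ 2 ≤
      (∑ i ∈ Finset.range (k + 1),
      (‖a i‖ ^ 2 * ((i : ℝ) + 1) ^ α) * (‖b (k - i)‖ ^ 2 * (((k - i : ℕ) : ℝ) + 1) ^ α)) *
      ∑ i ∈ Finset.range (k + 1),
      (((i : ℝ) + 1) ^ (-α) * (((k - i : ℕ) : ℝ) + 1) ^ (-α)) := by
    apply Finset.sum_sq_le_sum_mul_sum_of_sq_le_mul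
    · intro i _; positivity
    · intro i _; positivity
    · intro i _
      rw [Real.rpow_neg (by positivity), Real.rpow_neg (by positivity)]
      have hi : 0 < ((i : ℝ) + 1) ^ α := by positivity
      have hj : 0 < (((k - i : ℕ) : ℝ) + 1) ^ α := by positivity
      apply le_of_eq
      field_simp
  have h3 := weight_sum hα k
  set F := ∑ i ∈ Finset.range (k + 1),
      (‖a i‖ ^ 2 * ((i : ℝ) + 1) ^ α) * (‖b (k - i)‖ ^ 2 * (((k - i : ℕ) : ℝ) + 1) ^ α)
  have hF : 0 ≤ F := Finset.sum_nonneg (fun i _ => by positivity)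
  calc _ ≤ (F * ∑ i ∈ Finset.range (k + 1),
      (((i : ℝ) + 1) ^ (-α) * (((k - i : ℕ) : ℝ) + 1) ^ (-α))) * ((k : ℝ) + 1) ^ α := by
        gcongr
        exact (pow_le_pow_left₀ (norm_nonneg _) h1 2).trans h2
    _ = F * (((k : ℝ) + 1) ^ α * ∑ i ∈ Finset.range (k + 1),
      (((i : ℝ) + 1) ^ (-α) * (((k - i : ℕ) : ℝ) + 1) ^ (-α))) := by ring
    _ ≤ F * kConst α := by gcongr
    _ = _ := mul_comm _ _

lemma mul_bound {α : ℝ} (hα : 1 < α) {a b : ℕ → ℂ} (ha : MemD α a) (hb : MemD α b) :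
    MemD α (mulCoeff a b) ∧
    ∑' k : ℕ, ‖mulCoeff a b k‖ ^ 2 * ((k : ℝ) + 1) ^ α ≤ kConst α *
      ((∑' k : ℕ, ‖a k‖ ^ 2 * ((k : ℝ) + 1) ^ α) * (∑' k : ℕ, ‖b k‖ ^ 2 * ((k : ℝ) + 1) ^ α)) := by
  have hs := (summable_norm_sum_mul_range_of_summable_norm ha.norm hb.norm).of_norm
  have ht := tsum_mul_tsum_eq_tsum_sum_range_of_summable_norm ha.norm hb.norm
  have hs' := hs.mul_left (kConst α)
  have hm : MemD α (mulCoeff a b) :=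
    Summable.of_nonneg_of_le (fun k => by positivity) (term_le hα a b) hs'
  refine ⟨hm, ?_⟩
  rw [ht, ← tsum_mul_left]
  exact hm.tsum_le_tsum (term_le hα a b) hs'

lemma memD_add {α : ℝ} {a b : ℕ → ℂ} (ha : MemD α a) (hb : MemD α b) :
    MemD α (fun k => a k + b k) := by
  refine Summable.of_nonneg_of_le (fun k => by positivity) (fun k => ?_)
    ((ha.mul_left 2).add (hb.mul_left 2))
  have h : ‖a k + b k‖ ^ 2 ≤ 2 * ‖a k‖ ^ 2 + 2 * ‖b k‖ ^ 2 := by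
    have := pow_le_pow_left₀ (norm_nonneg _) (norm_add_le (a k) (b k)) 2
    nlinarith [sq_nonneg (‖a k‖ - ‖b k‖)]
  have hk : 0 ≤ ((k : ℝ) + 1) ^ α := by positivity
  nlinarith

lemma memD_smul {α : ℝ} {a : ℕ → ℂ} (c : ℂ) (ha : MemD α a) : MemD α (fun k => c * a k) := by
  refine (Summable.mul_left (‖c‖ ^ 2) ha).congr (fun k => ?_)
  rw [norm_mul]; ring

lemma memD_of_finite {α : ℝ} {a : ℕ → ℂ} (N : ℕ) (h : ∀ k, N ≤ k → a k = 0) : MemD α a := by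
  apply summable_of_ne_finset_zero (s := Finset.range N)
  intro k hk
  rw [h k (by simpa using hk)]; simp

lemma sq_DNorm (α : ℝ) (a : ℕ → ℂ) :
    DNorm α a ^ 2 = ∑' k : ℕ, ‖a k‖ ^ 2 * ((k : ℝ) + 1) ^ α :=
  Real.sq_sqrt (tsum_nonneg fun k => by positivity)

/-- The sup bound. -/
lemma summable_of_memD {α : ℝ} (hα : 1 < α) {a : ℕ → ℂ} (ha : MemD α a) :
    Summable (fun k : ℕ => ‖a k‖) ∧ ∑' k, ‖a k‖ ≤ Real.sqrt (zSum α) * DNorm α a := by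
  have hz := summable_zSum hα
  have key : ∀ s : Finset ℕ, ∑ k ∈ s, ‖a k‖ ≤ Real.sqrt (zSum α) * DNorm α a := by
    intro s
    have h2 : (∑ k ∈ s, ‖a k‖) ^ 2 ≤ (∑ k ∈ s, ((k : ℝ) + 1) ^ (-α)) *
        (∑ k ∈ s, ‖a k‖ ^ 2 * ((k : ℝ) + 1) ^ α) := by
      apply Finset.sum_sq_le_sum_mul_sum_of_sq_le_mul
      · intro i _; positivity
      · intro i _; positivity
      · intro i _
        rw [Real.rpow_neg (by positivity)]
        have hi : 0 < ((i : ℝ) + 1) ^ α := by positivity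
        apply le_of_eq
        field_simp
    rw [DNorm, ← Real.sqrt_mul (zSum_pos hα).le]
    apply Real.le_sqrt_of_sq_le
    refine h2.trans ?_
    have := zSum_pos hα
    refine mul_le_mul (hz.sum_le_tsum _ (fun i _ => by positivity))
      (Summable.sum_le_tsum _ (fun i _ => by positivity) ha)
      (Finset.sum_nonneg (fun i _ => by positivity)) this.le
  have hs : Summable (fun k : ℕ => ‖a k‖) :=
    summable_of_sum_le (fun _ => norm_nonneg _) key
  exact ⟨hs, hs.tsum_le_of_sum_le key⟩

/-- `D_α` as a subalgebra of formal power series. -/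
def dirSub (α : ℝ) [hα : Fact (1 < α)] : Subalgebra ℂ (PowerSeries ℂ) where
  carrier := {f | MemD α (fun k => PowerSeries.coeff k f)}
  mul_mem' := by
    intro f g hf hg
    have h := (mul_bound hα.out hf hg).1
    refine h.congr (fun k => ?_)
    simp only [mulCoeff, PowerSeries.coeff_mul]
    rw [Finset.Nat.sum_antidiagonal_eq_sum_range_succ
      (fun i j => PowerSeries.coeff i f * PowerSeries.coeff j g)]
  add_mem' := by
    intro f g hf hg
    exact (memD_add hf hg).congr (fun k => by simp)
  algebraMap_mem' := by
    intro r
    apply memD_of_finite 1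
    intro k hk
    have : k ≠ 0 := by omega
    simp [PowerSeries.algebraMap_apply, PowerSeries.coeff_C, this]

/-- `D_α` as a type. -/
def DA (α : ℝ) [Fact (1 < α)] : Type := ↥(dirSub α)

instance (α : ℝ) [Fact (1 < α)] : CommRing (DA α) := inferInstanceAs (CommRing ↥(dirSub α))
instance (α : ℝ) [Fact (1 < α)] : Algebra ℂ (DA α) := inferInstanceAs (Algebra ℂ ↥(dirSub α))

section
variable {α : ℝ} [hα : Fact (1 < α)]

/-- coefficients -/
def DA.co (f : DA α) (k : ℕ) : ℂ := PowerSeries.coeff k f.1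

lemma DA.mem (f : DA α) : MemD α f.co := f.2

/-- constructor -/
def DA.mk (a : ℕ → ℂ) (ha : MemD α a) : DA α :=
  ⟨PowerSeries.mk a, by
    change MemD α (fun k => PowerSeries.coeff k (PowerSeries.mk a))
    simpa using ha⟩

lemma DA.co_mk (a : ℕ → ℂ) (ha : MemD α a) : (DA.mk a ha).co = a := by
  funext k; exact PowerSeries.coeff_mk k a

lemma DA.ext_co {f g : DA α} (h : ∀ k, f.co k = g.co k) : f = g :=
  Subtype.ext (PowerSeries.ext h)

lemma DA.co_mul (f g : DA α) : (f * g).co = mulCoeff f.co g.co := by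
  funext k
  change PowerSeries.coeff k (f.1 * g.1) = _
  rw [PowerSeries.coeff_mul, Finset.Nat.sum_antidiagonal_eq_sum_range_succ
      (fun i j => PowerSeries.coeff i f.1 * PowerSeries.coeff j g.1)]
  rfl

lemma DA.co_one : (1 : DA α).co = oneCoeff := by
  funext k
  change PowerSeries.coeff k (1 : PowerSeries ℂ) = _
  rw [PowerSeries.coeff_one]; rfl

lemma DA.co_add (f g : DA α) (k : ℕ) : (f + g).co k = f.co k + g.co k := by
  change PowerSeries.coeff k (f.1 + g.1) = _
  rw [map_add]; rfl

lemma DA.co_sub (f g : DA α) (k : ℕ) : (f - g).co k = f.co k - g.co k := by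
  change PowerSeries.coeff k (f.1 - g.1) = _
  rw [map_sub]; rfl

lemma DA.co_smul (c : ℂ) (g : DA α) (k : ℕ) : (c • g).co k = c * g.co k := by
  change PowerSeries.coeff k (c • g.1) = _
  simp [DA.co]

/-- the weight of the isometry -/
def wt (α : ℝ) (k : ℕ) : ℝ := Real.sqrt (kConst α * ((k : ℝ) + 1) ^ α)

lemma wt_pos (hα : 1 < α) (k : ℕ) : 0 < wt α k := by
  have := kConst_pos hα
  unfold wt; positivity

lemma wt_norm (hα : 1 < α) (c : ℂ) (k : ℕ) :
    ‖(wt α k : ℂ) * c‖ ^ (2 : ENNReal).toReal = kConst α * (‖c‖ ^ 2 * ((k : ℝ) + 1) ^ α) := by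
  have h := kConst_pos hα
  have h2 : (2 : ENNReal).toReal = ((2 : ℕ) : ℝ) := by simp
  rw [h2, Real.rpow_natCast, norm_mul, mul_pow, Complex.norm_real, Real.norm_eq_abs, sq_abs, wt,
    Real.sq_sqrt (by positivity)]
  ring

/-- the isometry onto `ℓ²` -/
def isoL2 (α : ℝ) [hα : Fact (1 < α)] : DA α →ₗ[ℂ] lp (fun _ : ℕ => ℂ) 2 where
  toFun f := ⟨fun k => (wt α k : ℂ) * f.co k, by
    apply memℓp_gen
    exact (Summable.mul_left (kConst α) f.mem).congr (fun k => (wt_norm hα.out _ k).symm)⟩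
  map_add' f g := by
    ext k
    change (wt α k : ℂ) * (f + g).co k = (wt α k : ℂ) * f.co k + (wt α k : ℂ) * g.co k
    rw [DA.co_add, mul_add]
  map_smul' c f := by
    ext k
    change (wt α k : ℂ) * (c • f).co k = c * ((wt α k : ℂ) * f.co k)
    rw [DA.co_smul]; ring

lemma isoL2_apply (f : DA α) (k : ℕ) : isoL2 α f k = (wt α k : ℂ) * f.co k := rfl

lemma isoL2_inj : Function.Injective (isoL2 α) := by
  intro f g h
  apply DA.ext_co
  intro k
  have h1 : isoL2 α f k = isoL2 α g k := by rw [h]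
  rw [isoL2_apply, isoL2_apply] at h1
  exact mul_left_cancel₀ (by exact_mod_cast (wt_pos hα.out k).ne') h1

lemma isoL2_surj : Function.Surjective (isoL2 α) := by
  intro x
  have hw : ∀ k, (wt α k : ℂ) ≠ 0 := fun k => by exact_mod_cast (wt_pos hα.out k).ne'
  have hm : MemD α (fun k => (wt α k : ℂ)⁻¹ * x k) := by
    have h := (memℓp_gen_iff (by simp)).1 x.2
    refine (h.mul_left (kConst α)⁻¹).congr (fun k => ?_)
    have h1 := wt_norm hα.out ((wt α k : ℂ)⁻¹ * x k) k
    rw [mul_inv_cancel_left₀ (hw k)] at h1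
    rw [h1, inv_mul_cancel_left₀ (kConst_pos hα.out).ne']
  refine ⟨DA.mk _ hm, ?_⟩
  ext k
  rw [isoL2_apply, DA.co_mk, mul_inv_cancel_left₀ (hw k)]

lemma isoL2_norm (f : DA α) : ‖isoL2 α f‖ = Real.sqrt (kConst α) * DNorm α f.co := by
  have h := lp.norm_rpow_eq_tsum (p := 2) (by simp) (isoL2 α f)
  have h2 : (2 : ENNReal).toReal = ((2 : ℕ) : ℝ) := by simp
  have h3 : ∀ k, ‖isoL2 α f k‖ ^ (2 : ENNReal).toReal = _ := fun k => wt_norm hα.out (f.co k) k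
  simp_rw [h3] at h
  rw [tsum_mul_left, ← sq_DNorm, h2, Real.rpow_natCast] at h
  have hk := kConst_pos hα.out
  have hd : 0 ≤ DNorm α f.co := Real.sqrt_nonneg _
  rw [← Real.sqrt_sq (norm_nonneg (isoL2 α f)), h, Real.sqrt_mul hk.le, Real.sqrt_sq hd]

instance : NormedAddCommGroup (DA α) :=
  NormedAddCommGroup.induced (DA α) (lp (fun _ : ℕ => ℂ) 2) (isoL2 α) isoL2_inj

lemma DA.norm_def (f : DA α) : ‖f‖ = Real.sqrt (kConst α) * DNorm α f.co := isoL2_norm f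

lemma DA.norm_mul_le (f g : DA α) : ‖f * g‖ ≤ ‖f‖ * ‖g‖ := by
  have hk := kConst_pos hα.out
  simp only [DA.norm_def, DA.co_mul]
  have h := (mul_bound hα.out f.mem g.mem).2
  simp only [← sq_DNorm] at h
  have h1 : 0 ≤ DNorm α f.co := Real.sqrt_nonneg _
  have h2 : 0 ≤ DNorm α g.co := Real.sqrt_nonneg _
  have h3 : 0 ≤ DNorm α (mulCoeff f.co g.co) := Real.sqrt_nonneg _
  refine (sq_le_sq₀ (by positivity) (by positivity)).1 ?_
  simp only [mul_pow, Real.sq_sqrt hk.le]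
  nlinarith

instance : NormedCommRing (DA α) :=
  { (inferInstance : NormedAddCommGroup (DA α)), (inferInstance : CommRing (DA α)) with
    norm_mul_le := DA.norm_mul_le }

instance : NormedAlgebra ℂ (DA α) where
  norm_smul_le c f := by
    change ‖isoL2 α (c • f)‖ ≤ ‖c‖ * ‖isoL2 α f‖
    rw [map_smul, norm_smul]

lemma isoL2_isometry : Isometry (isoL2 α) :=
  AddMonoidHomClass.isometry_of_norm (isoL2 α) (fun _ => rfl)

instance : CompleteSpace (DA α) := by
  have h := (isoL2_isometry (α := α)).isUniformInducing
  rw [completeSpace_congr (e := Equiv.ofBijective (isoL2 α) ⟨isoL2_inj, isoL2_surj⟩)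
    (isoL2_isometry (α := α)).isUniformEmbedding]
  infer_instance

/-- truncation polynomial -/
def trunc (a : ℕ → ℂ) (n : ℕ) : Polynomial ℂ := ∑ k ∈ Finset.range n, Polynomial.monomial k (a k)

lemma trunc_coeff (a : ℕ → ℂ) (n k : ℕ) : (trunc a n).coeff k = if k < n then a k else 0 := by
  simp [trunc, Polynomial.finsetSum_coeff, Polynomial.coeff_monomial]

lemma poly_mem (p : Polynomial ℂ) : MemD α p.coeff :=
  memD_of_finite (p.natDegree + 1) (fun k hk => Polynomial.coeff_eq_zero_of_natDegree_lt (by omega))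

/-- polynomial as element -/
def DA.poly (p : Polynomial ℂ) : DA α := DA.mk p.coeff (poly_mem p)

lemma DA.norm_le_of_sq {f : DA α} {c : ℝ} (hc : 0 ≤ c)
    (h : ∑' k : ℕ, ‖f.co k‖ ^ 2 * ((k : ℝ) + 1) ^ α ≤ c ^ 2) :
    ‖f‖ ≤ Real.sqrt (kConst α) * c := by
  rw [DA.norm_def]
  gcongr
  exact Real.sqrt_le_iff.2 ⟨hc, h⟩

lemma trunc_tendsto (f : DA α) :
    Tendsto (fun n => (DA.poly (trunc f.co n) : DA α)) atTop (𝓝 f) := by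
  rw [tendsto_iff_norm_sub_tendsto_zero]
  have h0 : Tendsto (fun n => ∑' k : ℕ, ‖f.co (k + n)‖ ^ 2 * (((k + n : ℕ) : ℝ) + 1) ^ α) atTop
      (𝓝 0) := tendsto_sum_nat_add (fun k : ℕ => ‖f.co k‖ ^ 2 * ((k : ℝ) + 1) ^ α)
  have h1 := (h0.sqrt).const_mul (Real.sqrt (kConst α))
  simp only [Real.sqrt_zero, mul_zero] at h1
  refine h1.congr (fun n => ?_)
  rw [DA.norm_def, DNorm]
  congr 2
  have hm := (DA.poly (trunc f.co n) - f).mem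
  rw [← Summable.sum_add_tsum_nat_add n hm, Finset.sum_eq_zero, zero_add]
  · apply tsum_congr
    intro k
    rw [DA.co_sub, DA.poly, DA.co_mk, trunc_coeff, if_neg (by omega)]
    simp
  · intro k hk
    rw [DA.co_sub, DA.poly, DA.co_mk, trunc_coeff, if_pos (by simpa using hk)]
    simp

/-- The algebra hom from polynomials. -/
lemma poly_eq (p : Polynomial ℂ) : (DA.poly p : DA α) =
    Polynomial.aeval (DA.poly Polynomial.X : DA α) p := by
  have hmul : ∀ p q : Polynomial ℂ, (DA.poly (p * q) : DA α) = DA.poly p * DA.poly q := by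
    intro p q
    apply DA.ext_co; intro k
    rw [DA.co_mul, DA.poly, DA.poly, DA.poly, DA.co_mk, DA.co_mk, DA.co_mk, Polynomial.coeff_mul,
      Finset.Nat.sum_antidiagonal_eq_sum_range_succ (fun i j => p.coeff i * q.coeff j)]
    rfl
  have hadd : ∀ p q : Polynomial ℂ, (DA.poly (p + q) : DA α) = DA.poly p + DA.poly q := by
    intro p q
    apply DA.ext_co; intro k
    rw [DA.co_add, DA.poly, DA.poly, DA.poly, DA.co_mk, DA.co_mk, DA.co_mk, Polynomial.coeff_add]
  have hone : (DA.poly 1 : DA α) = 1 := by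
    apply DA.ext_co; intro k
    rw [DA.co_one, DA.poly, DA.co_mk, Polynomial.coeff_one]; rfl
  have hC : ∀ c : ℂ, (DA.poly (Polynomial.C c) : DA α) = algebraMap ℂ (DA α) c := by
    intro c
    rw [Algebra.algebraMap_eq_smul_one]
    apply DA.ext_co; intro k
    rw [DA.co_smul, DA.co_one, DA.poly, DA.co_mk, Polynomial.coeff_C, oneCoeff]
    simp
  induction p using Polynomial.induction_on with
  | C c => rw [hC, Polynomial.aeval_C]
  | add p q hp hq => rw [hadd, hp, hq, map_add]
  | monomial n c h => rw [pow_succ, ← mul_assoc, hmul, h, map_mul _ _ Polynomial.X, Polynomial.aeval_X]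

lemma norm_X_pow (n : ℕ) : ‖(DA.poly Polynomial.X : DA α) ^ n‖ ^ 2 = kConst α * ((n : ℝ) + 1) ^ α := by
  have h : (DA.poly Polynomial.X : DA α) ^ n = DA.poly (Polynomial.X ^ n) := by
    rw [poly_eq (Polynomial.X ^ n)]; simp
  rw [h, DA.norm_def, mul_pow, Real.sq_sqrt (kConst_pos hα.out).le, sq_DNorm, tsum_eq_single n]
  · simp [DA.poly, DA.co_mk]
  · intro k hk
    simp [DA.poly, DA.co_mk, Polynomial.coeff_X_pow, hk]

lemma char_bound (φ : WeakDual.characterSpace ℂ (DA α)) :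
    ‖φ (DA.poly Polynomial.X)‖ ≤ 1 := by
  by_contra! hlt
  set x := ‖φ (DA.poly Polynomial.X)‖ with hx
  set C := ‖WeakDual.CharacterSpace.toCLM φ‖
  have hb : ∀ n : ℕ, (x ^ 2) ^ n ≤ C ^ 2 * (kConst α * ((n : ℝ) + 1) ^ α) := by
    intro n
    have h := (WeakDual.CharacterSpace.toCLM φ).le_opNorm ((DA.poly Polynomial.X : DA α) ^ n)
    rw [← norm_X_pow n, ← mul_pow, ← pow_mul, mul_comm 2 n, pow_mul]
    apply pow_le_pow_left₀ (by positivity)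
    rw [hx, ← norm_pow, ← map_pow]
    exact h
  have hx2 : 1 < x ^ 2 := by nlinarith
  obtain ⟨m, hm⟩ := exists_nat_ge α
  have hb' : ∀ n : ℕ, (x ^ 2) ^ (n + 1) ≤ (x ^ 2) * (C ^ 2 * kConst α) * (((n + 1 : ℕ) : ℝ)) ^ m := by
    intro n
    have h1 : ((n : ℝ) + 1) ^ α ≤ ((n + 1 : ℕ) : ℝ) ^ m := by
      rw [← Real.rpow_natCast]
      push_cast
      exact Real.rpow_le_rpow_of_exponent_le (by linarith [(Nat.cast_nonneg n : (0 : ℝ) ≤ n)]) hm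
    have hk := kConst_pos hα.out
    calc _ = x ^ 2 * (x ^ 2) ^ n := by ring
      _ ≤ x ^ 2 * (C ^ 2 * (kConst α * ((n : ℝ) + 1) ^ α)) := by gcongr; exact hb n
      _ ≤ x ^ 2 * (C ^ 2 * (kConst α * ((n + 1 : ℕ) : ℝ) ^ m)) := by gcongr
      _ = _ := by ring
  have hlim : Tendsto (fun n : ℕ => (n : ℝ) ^ m / (x ^ 2) ^ n) atTop (𝓝 0) :=
    tendsto_pow_const_div_const_pow_of_one_lt m hx2
  have hlim2 := ((tendsto_add_atTop_iff_nat 1).2 hlim).const_mul (x ^ 2 * (C ^ 2 * kConst α))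
  rw [mul_zero] at hlim2
  have hge : (1 : ℝ) ≤ 0 := by
    refine ge_of_tendsto' hlim2 (fun n => ?_)
    have hp : 0 < (x ^ 2) ^ (n + 1) := by positivity
    rw [← mul_div_assoc, le_div_iff₀ hp, one_mul]
    exact hb' n
  linarith

lemma char_eval (φ : WeakDual.characterSpace ℂ (DA α)) (f : DA α) :
    φ f = ∑' k : ℕ, f.co k * φ (DA.poly Polynomial.X) ^ k := by
  set l := φ (DA.poly Polynomial.X) with hl
  have hl1 : ‖l‖ ≤ 1 := char_bound φ
  have hs : Summable (fun k => f.co k * l ^ k) := by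
    refine Summable.of_norm_bounded (summable_of_memD hα.out f.mem).1 (fun k => ?_)
    rw [norm_mul, norm_pow]
    exact mul_le_of_le_one_right (norm_nonneg _) (pow_le_one₀ (norm_nonneg _) hl1)
  have h1 : Tendsto (fun n => φ (DA.poly (trunc f.co n))) atTop (𝓝 (φ f)) :=
    ((WeakDual.CharacterSpace.toCLM φ).continuous.tendsto f).comp (trunc_tendsto f)
  refine tendsto_nhds_unique h1 ?_
  refine hs.hasSum.tendsto_sum_nat.congr (fun n => ?_)
  have h2 : φ (Polynomial.aeval (DA.poly Polynomial.X : DA α) (trunc f.co n)) =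
      Polynomial.aeval l (trunc f.co n) :=
    (Polynomial.aeval_algHom_apply (WeakDual.CharacterSpace.toAlgHom φ) _ _).symm
  rw [poly_eq, h2, trunc, map_sum]
  simp [Polynomial.aeval_monomial]

lemma cyclic_of_ne (f : DA α) (h : ∀ z : ℂ, ‖z‖ ≤ 1 → (∑' k : ℕ, f.co k * z ^ k) ≠ 0) :
    Cyclic α f.co := by
  have hu : IsUnit f := by
    by_contra hu
    obtain ⟨φ, hφ⟩ := WeakDual.CharacterSpace.exists_apply_eq_zero hu
    exact h _ (char_bound φ) ((char_eval φ f).symm.trans hφ)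
  obtain ⟨g, hg⟩ := hu.exists_left_inv
  refine ⟨fun n => trunc g.co n, ?_⟩
  have h1 := ((trunc_tendsto g).mul_const f)
  rw [hg, tendsto_iff_norm_sub_tendsto_zero] at h1
  have h2 := h1.const_mul (Real.sqrt (kConst α))⁻¹
  rw [mul_zero] at h2
  refine h2.congr (fun n => ?_)
  have hk : Real.sqrt (kConst α) ≠ 0 := (Real.sqrt_pos.2 (kConst_pos hα.out)).ne'
  rw [DA.norm_def, inv_mul_cancel_left₀ hk]
  congr 1
  funext k
  rw [DA.co_sub, DA.co_mul, DA.co_one, DA.poly, DA.co_mk]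

end

lemma ne_of_cyclic {α : ℝ} (hα : 1 < α) {a : ℕ → ℂ} (ha : MemD α a) (hc : Cyclic α a) (z : ℂ)
    (hz : ‖z‖ ≤ 1) : (∑' k : ℕ, a k * z ^ k) ≠ 0 := by
  intro h0
  obtain ⟨p, hp⟩ := hc
  have hsum : ∀ b : ℕ → ℂ, MemD α b → Summable (fun k => ‖b k * z ^ k‖) := by
    intro b hb
    refine Summable.of_nonneg_of_le (fun _ => norm_nonneg _) (fun k => ?_) (summable_of_memD hα hb).1
    rw [norm_mul, norm_pow]
    exact mul_le_of_le_one_right (norm_nonneg _) (pow_le_one₀ (norm_nonneg _) hz)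
  have hle : ∀ b : ℕ → ℂ, MemD α b → ‖∑' k, b k * z ^ k‖ ≤ Real.sqrt (zSum α) * DNorm α b := by
    intro b hb
    refine (norm_tsum_le_tsum_norm (hsum b hb)).trans
      (le_trans ?_ (summable_of_memD hα hb).2)
    refine (hsum b hb).tsum_le_tsum (fun k => ?_) (summable_of_memD hα hb).1
    rw [norm_mul, norm_pow]
    exact mul_le_of_le_one_right (norm_nonneg _) (pow_le_one₀ (norm_nonneg _) hz)
  have hpm : ∀ q : Polynomial ℂ, MemD α q.coeff := fun q =>
    memD_of_finite (q.natDegree + 1) (fun k hk => Polynomial.coeff_eq_zero_of_natDegree_lt (by omega))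
  have hone : MemD α oneCoeff := memD_of_finite 1 (fun k hk => by
    have : k ≠ 0 := by omega
    simp [oneCoeff, this])
  have hge : ∀ n, (1 : ℝ) ≤ Real.sqrt (zSum α) *
      DNorm α (fun k => mulCoeff (p n).coeff a k - oneCoeff k) := by
    intro n
    have hm := (mul_bound hα (hpm (p n)) ha).1
    have hd : MemD α (fun k => mulCoeff (p n).coeff a k - oneCoeff k) := by
      refine (memD_add hm (memD_smul (-1) hone)).congr (fun k => ?_)
      congr 3; ring
    refine le_trans (le_of_eq ?_) (hle _ hd)
    have e1 : ∑' k, mulCoeff (p n).coeff a k * z ^ k = 0 := by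
      have := tsum_mul_tsum_eq_tsum_sum_range_of_summable_norm (hsum _ (hpm (p n))) (hsum a ha)
      rw [h0, mul_zero] at this
      rw [this]
      apply tsum_congr
      intro k
      rw [mulCoeff, Finset.sum_mul]
      apply Finset.sum_congr rfl
      intro i hi
      have : k = i + (k - i) := by have := Finset.mem_range.1 hi; omega
      calc _ = (p n).coeff i * a (k - i) * z ^ (i + (k - i)) := by rw [← this]
        _ = _ := by ring
    have e2 : ∑' k, oneCoeff k * z ^ k = 1 := by
      rw [tsum_eq_single 0]
      · simp [oneCoeff]
      · intro k hk; simp [oneCoeff, hk]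
    simp_rw [sub_mul]
    rw [Summable.tsum_sub (hsum _ hm).of_norm (hsum _ hone).of_norm, e1, e2]
    simp
  have h2 := hp.const_mul (Real.sqrt (zSum α))
  rw [mul_zero] at h2
  have : (1 : ℝ) ≤ 0 := ge_of_tendsto' h2 hge
  linarith

/-- For `α > 1` and `f = Σ a_k z^k ∈ D_α`: the coefficients are absolutely summable, the
series converges absolutely on the closed disc and defines a continuous extension, and `f`
is cyclic iff it has no zeros on the closed disc, iff `|f| > c > 0` on `𝔻`. -/
theorem cyclic_iff_no_zeros (α : ℝ) (hα : 1 < α) (a : ℕ → ℂ) (ha : MemD α a) :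
    Summable (fun k : ℕ => ‖a k‖) ∧
    (∀ z : ℂ, ‖z‖ ≤ 1 → Summable (fun k : ℕ => ‖a k * z ^ k‖)) ∧
    ContinuousOn (fun z : ℂ => ∑' k : ℕ, a k * z ^ k) (Metric.closedBall 0 1) ∧
    (Cyclic α a ↔ ∀ z : ℂ, ‖z‖ ≤ 1 → (∑' k : ℕ, a k * z ^ k) ≠ 0) ∧
    (Cyclic α a ↔ ∃ c : ℝ, 0 < c ∧ ∀ z : ℂ, ‖z‖ < 1 → c < ‖∑' k : ℕ, a k * z ^ k‖) := by
  have hs := (summable_of_memD hα ha).1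
  have hb : ∀ (k : ℕ) (z : ℂ), ‖z‖ ≤ 1 → ‖a k * z ^ k‖ ≤ ‖a k‖ := by
    intro k z hz
    rw [norm_mul, norm_pow]
    exact mul_le_of_le_one_right (norm_nonneg _) (pow_le_one₀ (norm_nonneg _) hz)
  have hcont : ContinuousOn (fun z : ℂ => ∑' k : ℕ, a k * z ^ k) (Metric.closedBall 0 1) :=
    continuousOn_tsum (fun k => by fun_prop) hs (fun k z hz => hb k z (by simpa using hz))
  have hiff : Cyclic α a ↔ ∀ z : ℂ, ‖z‖ ≤ 1 → (∑' k : ℕ, a k * z ^ k) ≠ 0 := by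
    refine ⟨fun hc z hz => ne_of_cyclic hα ha hc z hz, fun h => ?_⟩
    haveI : Fact (1 < α) := ⟨hα⟩
    have := cyclic_of_ne (DA.mk a ha) (by rw [DA.co_mk]; exact h)
    rwa [DA.co_mk] at this
  refine ⟨hs, fun z hz => Summable.of_nonneg_of_le (fun _ => norm_nonneg _) (fun k => hb k z hz) hs,
    hcont, hiff, hiff.trans ⟨fun h => ?_, ?_⟩⟩
  · obtain ⟨z0, hz0, hmin⟩ := (isCompact_closedBall (0 : ℂ) 1).exists_isMinOn
      ⟨0, by simp⟩ hcont.norm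
    have hpos : 0 < ‖∑' k : ℕ, a k * z0 ^ k‖ := norm_pos_iff.2 (h z0 (by simpa using hz0))
    refine ⟨‖∑' k : ℕ, a k * z0 ^ k‖ / 2, by positivity, fun z hz => ?_⟩
    have := isMinOn_iff.1 hmin z (by simpa using hz.le)
    linarith
  · rintro ⟨c, hc, h⟩ z hz h0
    have hcl : closure (Metric.ball (0 : ℂ) 1) = Metric.closedBall 0 1 :=
      closure_ball 0 one_ne_zero
    have hle : ∀ w ∈ closure (Metric.ball (0 : ℂ) 1), c ≤ ‖∑' k : ℕ, a k * w ^ k‖ := by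
      intro w hw
      refine le_on_closure (f := fun _ => c) (fun x hx => (h x (by simpa using hx)).le)
        continuousOn_const ?_ hw
      rw [hcl]; exact hcont.norm
    have := hle z (by rw [hcl]; simpa using hz)
    rw [h0, norm_zero] at this
    linarith
end
end

section
/- Let α ∈ ℝ and d ∈ ℕ. There exists a constant ψ(d,α) > 0, depending only on d and α, with the following property. For any f, g ∈ D_α, both not identically 0, let p_d(f) and p_d(g) be the d-th optimal polynomial approximants to 1/f and 1/g respectively, let M(f), M(g) be the (d+1)×(d+1) matrices with entries ⟨S^k f, S^j f⟩_α and ⟨S^k g, S^j g⟩_α (these matrices are invertible), and let b(f), b(g) ∈ ℂ^{d+1} have entries ⟨1, S^j f⟩_α and ⟨1, S^j g⟩_α. Then ‖p_d(g) − p_d(f)‖_α ≤ ψ(d,α)·‖M(g)^{−1}‖_F·( ‖b(g) − b(f)‖ + ‖M(f)^{−1}‖_F·‖M(f) − M(g)‖_F·‖b(f)‖ ), where ‖·‖_F is the standard (unweighted) Frobenius norm on matrices and ‖·‖ the Euclidean norm on ℂ^{d+1}. -/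
open Filter Topology

noncomputable section

/-- Weighted coefficient sequence. -/
def wT (α : ℝ) (a : ℕ → ℂ) : ℕ → ℂ := fun k => a k * ((Real.sqrt (((k : ℝ) + 1) ^ α) : ℝ) : ℂ)

lemma wpos (α : ℝ) (k : ℕ) : 0 < ((k : ℝ) + 1) ^ α := by positivity

lemma norm_wT_sq (α : ℝ) (a : ℕ → ℂ) (k : ℕ) :
    ‖wT α a k‖ ^ 2 = ‖a k‖ ^ 2 * ((k : ℝ) + 1) ^ α := by
  rw [wT, norm_mul, mul_pow, Complex.norm_real, Real.norm_of_nonneg (Real.sqrt_nonneg _),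
    Real.sq_sqrt (wpos α k).le]

lemma memlp_of_memD {α : ℝ} {a : ℕ → ℂ} (h : MemD α a) : Memℓp (wT α a) 2 := by
  apply memℓp_gen
  simpa [norm_wT_sq, MemD] using h

/-- Embedding into `ℓ²`. -/
def toL (α : ℝ) (a : ℕ → ℂ) (h : MemD α a) : lp (fun _ : ℕ => ℂ) 2 :=
  ⟨wT α a, memlp_of_memD h⟩

lemma toL_apply (α : ℝ) (a : ℕ → ℂ) (h : MemD α a) (k : ℕ) : toL α a h k = wT α a k := rfl

lemma inner_toL (α : ℝ) (a b : ℕ → ℂ) (ha : MemD α a) (hb : MemD α b) :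
    inner ℂ (toL α b hb) (toL α a ha) = Dinner α a b := by
  rw [lp.inner_eq_tsum, Dinner]
  refine tsum_congr fun k => ?_
  rw [RCLike.inner_apply, toL_apply, toL_apply, wT, wT, map_mul, Complex.conj_ofReal]
  have : (((((k : ℝ) + 1) ^ α : ℝ)) : ℂ) =
      ((Real.sqrt (((k : ℝ) + 1) ^ α) : ℝ) : ℂ) * ((Real.sqrt (((k : ℝ) + 1) ^ α) : ℝ) : ℂ) := by
    rw [← Complex.ofReal_mul, Real.mul_self_sqrt (wpos α k).le]
  rw [this]
  ring

lemma norm_lp_eq (α : ℝ) (a : ℕ → ℂ) (x : lp (fun _ : ℕ => ℂ) 2) (h : ∀ k, x k = wT α a k) :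
    ‖x‖ = DNorm α a := by
  rw [lp.norm_eq_tsum_rpow (by norm_num), DNorm, Real.sqrt_eq_rpow]
  simp [h, norm_wT_sq]

lemma memD_shift {α : ℝ} {a : ℕ → ℂ} (h : MemD α a) (t : ℕ) : MemD α (shiftPow t a) := by
  unfold MemD at *
  rw [← summable_nat_add_iff t]
  refine Summable.of_nonneg_of_le (fun k => by positivity) (fun k => ?_)
    (h.mul_left (((t : ℝ) + 1) ^ |α|))
  have e : shiftPow t a (k + t) = a k := by simp [shiftPow]
  rw [e]
  have key : (((k + t : ℕ) : ℝ) + 1) ^ α ≤ ((t : ℝ) + 1) ^ |α| * ((k : ℝ) + 1) ^ α := by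
    push_cast
    rcases le_total 0 α with ha | ha
    · rw [abs_of_nonneg ha, ← Real.mul_rpow (by positivity) (by positivity)]
      apply Real.rpow_le_rpow (by positivity) _ ha
      nlinarith [mul_nonneg (Nat.cast_nonneg (α := ℝ) t) (Nat.cast_nonneg (α := ℝ) k)]
    · have h1 : (1 : ℝ) ≤ ((t : ℝ) + 1) ^ |α| := Real.one_le_rpow (by simp) (abs_nonneg _)
      have h2 : ((k : ℝ) + t + 1) ^ α ≤ ((k : ℝ) + 1) ^ α :=
        Real.rpow_le_rpow_of_nonpos (by positivity) (by linarith [Nat.cast_nonneg (α := ℝ) t]) ha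
      nlinarith [wpos α k]
  calc _ ≤ ‖a k‖ ^ 2 * (((t : ℝ) + 1) ^ |α| * ((k : ℝ) + 1) ^ α) := by gcongr
    _ = _ := by ring

lemma memD_one (α : ℝ) : MemD α oneCoeff := by
  apply summable_of_ne_finset_zero (s := {0})
  intro k hk
  have : k ≠ 0 := by simpa using hk
  simp [oneCoeff, this]

lemma mulCoeff_eq (f : ℕ → ℂ) (d : ℕ) (p : Polynomial ℂ) (hp : p.natDegree ≤ d) (k : ℕ) :
    mulCoeff p.coeff f k = ∑ j : Fin (d + 1), p.coeff j * shiftPow j f k := by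
  rw [Fin.sum_univ_eq_sum_range (fun j => p.coeff j * shiftPow j f k) (d + 1), mulCoeff]
  have e1 : ∑ i ∈ Finset.range (k + 1), p.coeff i * f (k - i) =
      ∑ i ∈ Finset.range (k + 1), p.coeff i * shiftPow i f k := by
    refine Finset.sum_congr rfl fun i hi => ?_
    have : ¬ k < i := by simp at hi; omega
    simp [shiftPow, this]
  rw [e1]
  have e2 : ∑ i ∈ Finset.range (k + 1), p.coeff i * shiftPow i f k =
      ∑ i ∈ Finset.range (k + 1 + (d + 1)), p.coeff i * shiftPow i f k := by
    apply Finset.sum_subset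
    · intro i hi; simp at *; omega
    · intro i _ hi
      have : k < i := by simp at hi; omega
      simp [shiftPow, this]
  have e3 : ∑ i ∈ Finset.range (d + 1), p.coeff i * shiftPow i f k =
      ∑ i ∈ Finset.range (k + 1 + (d + 1)), p.coeff i * shiftPow i f k := by
    apply Finset.sum_subset
    · intro i hi; simp at *; omega
    · intro i _ hi
      have : p.natDegree < i := by simp at hi; omega
      simp [Polynomial.coeff_eq_zero_of_natDegree_lt this]
  rw [e2, e3]

/-- Polynomial with given coefficients. -/
def mkPoly {d : ℕ} (c : Fin (d + 1) → ℂ) : Polynomial ℂ :=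
  ∑ j : Fin (d + 1), Polynomial.monomial (j : ℕ) (c j)

lemma mkPoly_coeff {d : ℕ} (c : Fin (d + 1) → ℂ) (j : Fin (d + 1)) :
    (mkPoly c).coeff j = c j := by
  simp only [mkPoly, Polynomial.finsetSum_coeff, Polynomial.coeff_monomial]
  rw [Finset.sum_eq_single j]
  · simp
  · intro b _ hb
    rw [if_neg]
    exact fun h => hb (Fin.ext h)
  · simp

lemma mkPoly_deg {d : ℕ} (c : Fin (d + 1) → ℂ) : (mkPoly c).natDegree ≤ d := by
  apply Polynomial.natDegree_sum_le_of_forall_le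
  intro i _
  exact (Polynomial.natDegree_monomial_le _).trans (by omega)

lemma mulCoeff_ps (p : Polynomial ℂ) (f : ℕ → ℂ) (k : ℕ) :
    mulCoeff p.coeff f k = PowerSeries.coeff k ((p : PowerSeries ℂ) * PowerSeries.mk f) := by
  rw [PowerSeries.coeff_mul, Finset.Nat.sum_antidiagonal_eq_sum_range_succ_mk, mulCoeff]
  simp

/-- The shifts of `f` in `ℓ²`. -/
def vv (α : ℝ) (d : ℕ) (f : ℕ → ℂ) (hf : MemD α f) (j : Fin (d + 1)) : lp (fun _ : ℕ => ℂ) 2 :=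
  toL α (shiftPow j f) (memD_shift hf j)

lemma sum_vv_apply (α : ℝ) (d : ℕ) (f : ℕ → ℂ) (hf : MemD α f) (p : Polynomial ℂ)
    (hp : p.natDegree ≤ d) (k : ℕ) :
    (∑ j : Fin (d + 1), p.coeff j • vv α d f hf j) k = wT α (mulCoeff p.coeff f) k := by
  rw [lp.coeFn_sum, Finset.sum_apply, wT, mulCoeff_eq f d p hp k, Finset.sum_mul]
  refine Finset.sum_congr rfl fun j _ => ?_
  rw [lp.coeFn_smul, Pi.smul_apply, vv, toL_apply, wT, smul_eq_mul, mul_assoc]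

lemma vv_indep (α : ℝ) (d : ℕ) (f : ℕ → ℂ) (hf : MemD α f) (h0 : f ≠ 0) :
    LinearIndependent ℂ (vv α d f hf) := by
  rw [Fintype.linearIndependent_iff]
  intro c hc
  have h1 : ∀ k, mulCoeff (mkPoly c).coeff f k = 0 := by
    intro k
    have := sum_vv_apply α d f hf (mkPoly c) (mkPoly_deg c) k
    simp only [mkPoly_coeff] at this
    rw [hc, wT] at this
    have h2 : Real.sqrt (((k : ℝ) + 1) ^ α) ≠ 0 := (Real.sqrt_pos.2 (wpos α k)).ne'
    have h3 := this.symm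
    rw [lp.coeFn_zero, Pi.zero_apply, mul_eq_zero] at h3
    exact h3.resolve_right (by exact_mod_cast h2)
  have h2 : ((mkPoly c : Polynomial ℂ) : PowerSeries ℂ) * PowerSeries.mk f = 0 := by
    ext k
    rw [← mulCoeff_ps, h1]; simp
  have h3 : PowerSeries.mk f ≠ 0 := by
    intro h
    apply h0
    ext k
    have := congrArg (PowerSeries.coeff k) h
    simpa using this
  have h4 := (mul_eq_zero.1 h2).resolve_right h3
  have h5 : mkPoly c = 0 := by simpa using h4
  intro i
  rw [← mkPoly_coeff c i, h5]; simp

lemma opaMatrix_eq (α : ℝ) (d : ℕ) (f : ℕ → ℂ) (hf : MemD α f) :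
    opaMatrix α d f = Matrix.gram ℂ (vv α d f hf) := by
  ext j k
  rw [Matrix.gram_apply, vv, vv, inner_toL]; rfl

lemma opaMatrix_det (α : ℝ) (d : ℕ) (f : ℕ → ℂ) (hf : MemD α f) (h0 : f ≠ 0) :
    IsUnit (opaMatrix α d f).det := by
  rw [opaMatrix_eq α d f hf, isUnit_iff_ne_zero]
  exact Matrix.det_gram_ne_zero_iff_linearIndependent.2 (vv_indep α d f hf h0)

lemma opa_system (α : ℝ) (d : ℕ) (f : ℕ → ℂ) (hf : MemD α f) (p : Polynomial ℂ)
    (hp : IsOPA α f d p) :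
    (opaMatrix α d f).mulVec (fun j => p.coeff j) = opaVec α d f := by
  set K : Submodule ℂ (lp (fun _ : ℕ => ℂ) 2) := Submodule.span ℂ (Set.range (vv α d f hf)) with hK
  set e := toL α oneCoeff (memD_one α) with he
  set u := ∑ j : Fin (d + 1), p.coeff j • vv α d f hf j with hu
  have hmem : ∀ j, vv α d f hf j ∈ K := fun j => Submodule.subset_span ⟨j, rfl⟩
  have huK : u ∈ K := Submodule.sum_mem _ fun j _ => K.smul_mem _ (hmem j)
  have hnorm : ∀ q : Polynomial ℂ, q.natDegree ≤ d →
      ‖e - ∑ j : Fin (d + 1), q.coeff j • vv α d f hf j‖ =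
        DNorm α (fun k => mulCoeff q.coeff f k - oneCoeff k) := by
    intro q hq
    rw [norm_sub_rev]
    apply norm_lp_eq
    intro k
    rw [lp.coeFn_sub, Pi.sub_apply, sum_vv_apply α d f hf q hq, he, toL_apply]
    simp only [wT]; ring
  have hmin : ‖e - u‖ = ⨅ w : K, ‖e - w‖ := by
    apply le_antisymm
    · apply le_ciInf
      rintro ⟨w, hw⟩
      obtain ⟨c, rfl⟩ := (Submodule.mem_span_range_iff_exists_fun ℂ).1 hw
      have h1 := hnorm p hp.1
      have h2 := hnorm (mkPoly c) (mkPoly_deg c)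
      simp only [mkPoly_coeff] at h2
      rw [hu, h1]
      change _ ≤ ‖e - ∑ i, c i • vv α d f hf i‖
      rw [h2]
      exact hp.2 _ (mkPoly_deg c)
    · exact ciInf_le ⟨0, by rintro _ ⟨w, rfl⟩; exact norm_nonneg _⟩ (⟨u, huK⟩ : K)
  have hz := (K.norm_eq_iInf_iff_inner_eq_zero huK).1 hmin
  ext j
  have h1 := hz _ (hmem j)
  rw [← inner_conj_symm, map_eq_zero, inner_sub_right, sub_eq_zero] at h1
  have h2 : opaVec α d f j = inner ℂ (vv α d f hf j) e := by
    rw [vv, he, inner_toL]; rfl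
  rw [h2, h1, hu, inner_sum, opaMatrix_eq α d f hf, Matrix.mulVec, dotProduct]
  refine Finset.sum_congr rfl fun k _ => ?_
  rw [inner_smul_right, Matrix.gram_apply, mul_comm]

lemma euclNorm_eq {m : ℕ} (v : Fin m → ℂ) : euclNorm v = ‖WithLp.toLp 2 v‖ := by
  rw [EuclideanSpace.norm_eq]; rfl

lemma euclNorm_add {m : ℕ} (v w : Fin m → ℂ) : euclNorm (v + w) ≤ euclNorm v + euclNorm w := by
  simp only [euclNorm_eq, WithLp.toLp_add]
  exact norm_add_le _ _

lemma euclNorm_nonneg {m : ℕ} (v : Fin m → ℂ) : 0 ≤ euclNorm v := Real.sqrt_nonneg _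

lemma frobNorm_nonneg {m n : ℕ} (M : Matrix (Fin m) (Fin n) ℂ) : 0 ≤ frobNorm M :=
  Real.sqrt_nonneg _

lemma euclNorm_mulVec {m n : ℕ} (M : Matrix (Fin m) (Fin n) ℂ) (v : Fin n → ℂ) :
    euclNorm (M.mulVec v) ≤ frobNorm M * euclNorm v := by
  rw [euclNorm, euclNorm, frobNorm, ← Real.sqrt_mul (by positivity)]
  apply Real.sqrt_le_sqrt
  rw [Finset.sum_mul]
  refine Finset.sum_le_sum fun j _ => ?_
  calc ‖M.mulVec v j‖ ^ 2 ≤ (∑ k, ‖M j k‖ * ‖v k‖) ^ 2 := by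
        gcongr
        rw [Matrix.mulVec, dotProduct]
        exact (norm_sum_le _ _).trans (by simp)
    _ ≤ _ := Finset.sum_mul_sq_le_sq_mul_sq _ _ _

lemma DNorm_poly (α : ℝ) (d : ℕ) (p q : Polynomial ℂ) (hp : p.natDegree ≤ d)
    (hq : q.natDegree ≤ d) :
    DNorm α (fun k => q.coeff k - p.coeff k) ≤ Real.sqrt (((d : ℝ) + 1) ^ |α|) *
      euclNorm (fun j : Fin (d + 1) => q.coeff j - p.coeff j) := by
  rw [DNorm, euclNorm, ← Real.sqrt_mul (by positivity)]
  apply Real.sqrt_le_sqrt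
  rw [tsum_eq_sum (s := Finset.range (d + 1)),
    Fin.sum_univ_eq_sum_range (fun j => ‖q.coeff j - p.coeff j‖ ^ 2) (d + 1), Finset.mul_sum]
  · refine Finset.sum_le_sum fun k hk => ?_
    rw [mul_comm]
    gcongr
    have hk' : (k : ℝ) + 1 ≤ d + 1 := by
      have : k ≤ d := by simp at hk; omega
      have : (k : ℝ) ≤ d := by exact_mod_cast this
      linarith
    calc ((k : ℝ) + 1) ^ α ≤ ((k : ℝ) + 1) ^ |α| :=
          Real.rpow_le_rpow_of_exponent_le (by simp) (le_abs_self α)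
      _ ≤ _ := Real.rpow_le_rpow (by positivity) hk' (abs_nonneg _)
  · intro k hk
    have hk' : d < k := by simp at hk; omega
    simp [Polynomial.coeff_eq_zero_of_natDegree_lt (hp.trans_lt hk'),
      Polynomial.coeff_eq_zero_of_natDegree_lt (hq.trans_lt hk')]

/-- There is `ψ(d,α) > 0` such that for all nonzero `f, g ∈ D_α` with `d`-th optimal
polynomial approximants `p`, `q` to `1/f`, `1/g`,
`‖q - p‖_α ≤ ψ(d,α) ‖M(g)⁻¹‖_F (‖b(g) - b(f)‖ + ‖M(f)⁻¹‖_F ‖M(f) - M(g)‖_F ‖b(f)‖)`. -/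
theorem opa_diff_estimate (α : ℝ) (d : ℕ) :
    ∃ ψ : ℝ, 0 < ψ ∧ ∀ f g : ℕ → ℂ, MemD α f → MemD α g → f ≠ 0 → g ≠ 0 →
      ∀ p q : Polynomial ℂ, IsOPA α f d p → IsOPA α g d q →
        DNorm α (fun k => q.coeff k - p.coeff k) ≤
          ψ * frobNorm (opaMatrix α d g)⁻¹ *
            (euclNorm (fun j : Fin (d + 1) => opaVec α d g j - opaVec α d f j) +
              frobNorm (opaMatrix α d f)⁻¹ *
                frobNorm (opaMatrix α d f - opaMatrix α d g) *
                euclNorm (opaVec α d f)) := by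
  refine ⟨Real.sqrt (((d : ℝ) + 1) ^ |α|), Real.sqrt_pos.2 (by positivity), ?_⟩
  intro f g hf hg hf0 hg0 p q hp hq
  refine (DNorm_poly α d p q hp.1 hq.1).trans ?_
  rw [mul_assoc]
  refine mul_le_mul_of_nonneg_left ?_ (Real.sqrt_nonneg _)
  have sf := opa_system α d f hf p hp
  have sg := opa_system α d g hg q hq
  have uf := opaMatrix_det α d f hf hf0
  have ug := opaMatrix_det α d g hg hg0
  set Mf := opaMatrix α d f
  set Mg := opaMatrix α d g
  set bf := opaVec α d f
  set bg := opaVec α d g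
  set cp : Fin (d + 1) → ℂ := fun j => p.coeff j
  set cq : Fin (d + 1) → ℂ := fun j => q.coeff j
  have hcp : cp = Mf⁻¹.mulVec bf := by
    rw [← sf, Matrix.mulVec_mulVec, Matrix.nonsing_inv_mul _ uf, Matrix.one_mulVec]
  have hdiff : (fun j : Fin (d + 1) => q.coeff j - p.coeff j) =
      Mg⁻¹.mulVec ((fun j => bg j - bf j) + (Mf - Mg).mulVec (Mf⁻¹.mulVec bf)) := by
    have h1 : ((fun j => bg j - bf j) + (Mf - Mg).mulVec (Mf⁻¹.mulVec bf)) =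
        Mg.mulVec (cq - cp) := by
      rw [← hcp, Matrix.sub_mulVec, sf, Matrix.mulVec_sub, sg]
      ext j
      simp
    rw [h1, Matrix.mulVec_mulVec, Matrix.nonsing_inv_mul _ ug, Matrix.one_mulVec]
    rfl
  rw [hdiff]
  refine (euclNorm_mulVec _ _).trans (mul_le_mul_of_nonneg_left ?_ (frobNorm_nonneg _))
  refine (euclNorm_add _ _).trans (add_le_add le_rfl ?_)
  calc _ ≤ frobNorm (Mf - Mg) * euclNorm (Mf⁻¹.mulVec bf) := euclNorm_mulVec _ _
    _ ≤ frobNorm (Mf - Mg) * (frobNorm Mf⁻¹ * euclNorm bf) :=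
        mul_le_mul_of_nonneg_left (euclNorm_mulVec _ _) (frobNorm_nonneg _)
    _ = _ := by ring
end
end
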